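/- There exist sequences of unital completely positive maps φ_n : S₀ → M_n(ℂ) and ψ_n : M_n(ℂ) → S₀ such that ψ_n ∘ φ_n converges to the identity map of S₀ in the point-norm topology, i.e., ‖X − ψ_n(φ_n(X))‖ → 0 for every X ∈ S₀. (This is the concrete completely positive approximation property underlying the nuclearity of the operator system S₀.) -/

import Mathlib

noncomputable section

open scoped ComplexOrder InnerProductSpace

/-- The Hilbert space ℓ²(ℕ) of square-summable complex sequences. -/
abbrev Hs : Type := lp (fun _ : ℕ => ℂ) 2

/-- The standard orthonormal basis vectors of ℓ²(ℕ) (indexed from 0). -/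
def e (i : ℕ) : Hs := lp.single 2 i 1

/-- The matrix unit `E i j : x ↦ ⟨x, e j⟩ e i`. -/
def E (i j : ℕ) : Hs →L[ℂ] Hs := (innerSL ℂ (e j)).smulRight (e i)

/-- `K₀`: the norm-closed linear span of the matrix units `E i j`, `(i,j) ≠ (0,0)`. -/
def K0 : Submodule ℂ (Hs →L[ℂ] Hs) :=
  (Submodule.span ℂ {T | ∃ i j : ℕ, (i, j) ≠ (0, 0) ∧ T = E i j}).topologicalClosure

/-- The operator system `S₀` spanned by `K₀` and the identity operator. -/
def S0 : Submodule ℂ (Hs →L[ℂ] Hs) := Submodule.span ℂ {(1 : Hs →L[ℂ] Hs)} ⊔ K0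

lemma one_mem_S0 : (1 : Hs →L[ℂ] Hs) ∈ S0 :=
  Submodule.mem_sup_left (Submodule.mem_span_singleton_self _)

/-- The matrix entry `X_{ij} = ⟨X e_j, e_i⟩` of a bounded operator on ℓ²(ℕ). -/
def entry (X : Hs →L[ℂ] Hs) (i j : ℕ) : ℂ := ⟪e i, X (e j)⟫_ℂ

/-- `φ_{n+1}(X) = V_{n+1}* X V_{n+1}`, the upper-left (n+1)×(n+1) corner of `X`. -/
def phi (n : ℕ) (X : Hs →L[ℂ] Hs) : Matrix (Fin (n+1)) (Fin (n+1)) ℂ :=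
  fun i j => entry X i j

/-- `Q_{n+1}`: the projection onto the orthocomplement of the span of `e 0, …, e n`. -/
def Qop (n : ℕ) : Hs →L[ℂ] Hs := 1 - ∑ i : Fin (n+1), E i i

/-- `ψ_{n+1}(Y) = V_{n+1} Y V_{n+1}* + y₀₀ Q_{n+1}`. -/
def psi (n : ℕ) (Y : Matrix (Fin (n+1)) (Fin (n+1)) ℂ) : Hs →L[ℂ] Hs :=
  (∑ i : Fin (n+1), ∑ j : Fin (n+1), Y i j • E i j) + Y 0 0 • Qop n

/-- Positivity in the C*-algebra of m×m matrices over a star ring: `M = N* N`. -/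
def MatPos {A : Type*} [Ring A] [StarRing A] {m : ℕ}
    (M : Matrix (Fin m) (Fin m) A) : Prop :=
  ∃ N : Matrix (Fin m) (Fin m) A, M = N.conjTranspose * N

/-- Complete positivity of a map between star rings: every matrix amplification
preserves positivity. -/
def IsCPfun {A B : Type*} [Ring A] [StarRing A] [Ring B] [StarRing B]
    (θ : A → B) : Prop :=
  ∀ (m : ℕ) (M : Matrix (Fin m) (Fin m) A), MatPos M → MatPos (M.map θ)

/-- Complete positivity for a map defined on the operator subsystem `S₀ ⊆ B(ℓ²(ℕ))`:
matrices over `S₀` which are positive in the C*-algebra of matrices over `B(ℓ²(ℕ))`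
are mapped to positive matrices. -/
def IsCPonS0 {B : Type*} [Ring B] [StarRing B] (θ : ↥S0 → B) : Prop :=
  ∀ (m : ℕ) (M : Matrix (Fin m) (Fin m) ↥S0),
    MatPos (M.map (fun x => (x : Hs →L[ℂ] Hs))) → MatPos (M.map θ)

lemma e_inner (i j : ℕ) : ⟪e i, e j⟫_ℂ = if i = j then 1 else 0 := by
  unfold e
  rw [lp.inner_single_left]
  simp [Pi.single_apply]

lemma E_apply (i j : ℕ) (x : Hs) : E i j x = ⟪e j, x⟫_ℂ • e i := by
  simp [E]

lemma E_mul (i j k l : ℕ) : E i j * E k l = if j = k then E i l else 0 := by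
  ext1 x
  rw [mul_apply_eq_comp, E_apply, E_apply, inner_smul_right, e_inner]
  split_ifs <;> simp [E_apply]

lemma E_star (i j : ℕ) : star (E i j) = E j i := by
  rw [ContinuousLinearMap.star_eq_adjoint]
  symm
  rw [ContinuousLinearMap.eq_adjoint_iff]
  intro x y
  simp only [E_apply, inner_smul_left, inner_smul_right, inner_conj_symm]
  ring

def iot (n : ℕ) (Y : Matrix (Fin (n+1)) (Fin (n+1)) ℂ) : Hs →L[ℂ] Hs :=
  ∑ i : Fin (n+1), ∑ j : Fin (n+1), Y i j • E i j

lemma iot_add (n : ℕ) (Y Z) : iot n (Y + Z) = iot n Y + iot n Z := by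
  simp [iot, add_smul, Finset.sum_add_distrib]

lemma iot_smul (n : ℕ) (c : ℂ) (Z) : iot n (c • Z) = c • iot n Z := by
  simp [iot, Finset.smul_sum, smul_smul]

def iotL (n : ℕ) : Matrix (Fin (n+1)) (Fin (n+1)) ℂ →ₗ[ℂ] (Hs →L[ℂ] Hs) where
  toFun := iot n
  map_add' := iot_add n
  map_smul' := iot_smul n

lemma iot_sum {ι : Type*} (n : ℕ) (s : Finset ι)
    (f : ι → Matrix (Fin (n+1)) (Fin (n+1)) ℂ) :
    iot n (∑ i ∈ s, f i) = ∑ i ∈ s, iot n (f i) := map_sum (iotL n) f s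

lemma iot_mul (n : ℕ) (Y Z) : iot n (Y * Z) = iot n Y * iot n Z := by
  simp only [iot, Finset.sum_mul]
  simp only [Finset.mul_sum, smul_mul_smul_comm, E_mul, Fin.val_inj]
  simp only [smul_ite, smul_zero, Matrix.mul_apply, Finset.sum_smul]
  refine Finset.sum_congr rfl fun i _ => ?_
  rw [Finset.sum_comm]
  refine Finset.sum_congr rfl fun k _ => ?_
  rw [Finset.sum_comm]
  refine Finset.sum_congr rfl fun l _ => ?_
  simp

lemma iot_star (n : ℕ) (Y) : star (iot n Y) = iot n (star Y) := by
  simp only [iot, star_sum, star_smul, E_star, Matrix.star_apply]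
  rw [Finset.sum_comm]

lemma iot_one (n : ℕ) : iot n 1 = ∑ i : Fin (n+1), E i i := by
  simp [iot, Matrix.one_apply, ite_smul]

lemma Qop_eq (n : ℕ) : Qop n = 1 - iot n 1 := by rw [iot_one]; rfl

lemma Qop_mul_iot (n : ℕ) (Y) : Qop n * iot n Y = 0 := by
  rw [Qop_eq, sub_mul, ← iot_mul]; simp

lemma iot_mul_Qop (n : ℕ) (Y) : iot n Y * Qop n = 0 := by
  rw [Qop_eq, mul_sub, ← iot_mul]; simp

lemma Qop_mul (n : ℕ) : Qop n * Qop n = Qop n := by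
  nth_rewrite 1 [Qop_eq]
  rw [sub_mul, iot_mul_Qop]; simp

lemma Qop_star (n : ℕ) : star (Qop n) = Qop n := by
  rw [Qop_eq, star_sub, iot_star]; simp

lemma psi_eq (n : ℕ) (Y) : psi n Y = iot n Y + Y 0 0 • Qop n := rfl

lemma psi_one (n : ℕ) : psi n 1 = 1 := by
  rw [psi_eq, Qop_eq]; simp

lemma psi_mem (n : ℕ) (Y) : psi n Y ∈ S0 := by
  have h : psi n Y = Y 0 0 • 1 + iot n (Y + (-Y 0 0) • 1) := by
    rw [psi_eq, Qop_eq, iot_add, iot_smul, smul_sub, neg_smul]; abel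
  rw [h]
  refine Submodule.add_mem_sup (Submodule.smul_mem _ _ (Submodule.mem_span_singleton_self _)) ?_
  refine Submodule.sum_mem _ fun i _ => Submodule.sum_mem _ fun j _ => ?_
  by_cases hij : i = 0 ∧ j = 0
  · obtain ⟨rfl, rfl⟩ := hij
    have h0 : (Y + (-Y 0 0) • (1 : Matrix (Fin (n+1)) (Fin (n+1)) ℂ)) 0 0 = 0 := by
      rw [Matrix.add_apply, Matrix.smul_apply, Matrix.one_apply_eq, smul_eq_mul, mul_one,
        add_neg_cancel]
    rw [h0, zero_smul]
    exact Submodule.zero_mem _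
  · refine Submodule.smul_mem _ _ (Submodule.le_topologicalClosure _ (Submodule.subset_span ?_))
    refine ⟨i, j, ?_, rfl⟩
    intro h'
    rw [Prod.mk.injEq] at h'
    exact hij ⟨Fin.ext h'.1, Fin.ext h'.2⟩

lemma entry_add (X Y : Hs →L[ℂ] Hs) (i j : ℕ) : entry (X + Y) i j = entry X i j + entry Y i j := by
  simp [entry, inner_add_right]

lemma entry_smul (c : ℂ) (Y : Hs →L[ℂ] Hs) (i j : ℕ) : entry (c • Y) i j = c * entry Y i j := by
  simp [entry, inner_smul_right]

def phiL (n : ℕ) : ↥S0 →ₗ[ℂ] Matrix (Fin (n+1)) (Fin (n+1)) ℂ where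
  toFun X := phi n X
  map_add' X Y := by ext i j; simp [phi, entry_add]
  map_smul' c Y := by ext i j; simp [phi, entry_smul]

def psiL (n : ℕ) : Matrix (Fin (n+1)) (Fin (n+1)) ℂ →ₗ[ℂ] ↥S0 where
  toFun Y := ⟨psi n Y, psi_mem n Y⟩
  map_add' X Y := by ext1; simp [psi_eq, iot_add, add_smul]; abel
  map_smul' c Y := by ext1; simp [psi_eq, iot_smul, smul_smul]

lemma phi_one (n : ℕ) : phi n 1 = 1 := by
  ext i j
  simp [phi, entry, e_inner, Matrix.one_apply, Fin.ext_iff]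

lemma iot_phi (n : ℕ) (X : Hs →L[ℂ] Hs) : iot n (phi n X) = iot n 1 * X * iot n 1 := by
  rw [iot_one, Finset.sum_mul, Finset.sum_mul]
  simp only [Finset.mul_sum, iot]
  refine Finset.sum_congr rfl fun i _ => Finset.sum_congr rfl fun j _ => ?_
  ext1 x
  simp only [mul_apply_eq_comp, ContinuousLinearMap.smul_apply, E_apply, map_smul,
    inner_smul_right, smul_smul, phi, entry]
  rw [mul_comm]

open scoped MatrixOrder Matrix.Norms.L2Operator in
lemma psd_sqrt {n : Type*} [Fintype n] [DecidableEq n] {A : Matrix n n ℂ} (hA : A.PosSemidef) :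
    ∃ B : Matrix n n ℂ, A = B.conjTranspose * B :=
  CStarAlgebra.nonneg_iff_eq_star_mul_self.mp hA.nonneg

lemma phi_cp (n : ℕ) : IsCPonS0 (phiL n) := by
  rintro m M ⟨N, hN⟩
  let F : Matrix (Fin m × Fin (n+1)) (Fin m × Fin (n+1)) ℂ :=
    fun p q => entry (M p.1 q.1) p.2 q.2
  have hF : F = ∑ c : Fin m, Matrix.gram ℂ (fun p : Fin m × Fin (n+1) => N c p.1 (e p.2)) := by
    ext p q
    have := congrFun (congrFun hN p.1) q.1
    simp only [Matrix.map_apply, Matrix.mul_apply, Matrix.conjTranspose_apply] at this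
    simp only [F, this, entry, Matrix.sum_apply, Matrix.gram_apply,
      ContinuousLinearMap.sum_apply, inner_sum, mul_apply_eq_comp,
      ContinuousLinearMap.star_eq_adjoint, ContinuousLinearMap.adjoint_inner_right]
  have hP : F.PosSemidef := by
    rw [hF]
    exact Matrix.posSemidef_sum _ fun c _ => Matrix.posSemidef_gram ℂ _
  obtain ⟨B, hB⟩ := psd_sqrt hP
  refine ⟨Matrix.of fun a b => Matrix.of fun i j => B (a, i) (b, j), ?_⟩
  ext a b i j
  have := congrFun (congrFun hB (a, i)) (b, j)
  rw [Matrix.mul_apply, Fintype.sum_prod_type] at this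
  rw [Matrix.map_apply, Matrix.mul_apply, Matrix.sum_apply]
  simp only [Matrix.mul_apply, Matrix.conjTranspose_apply, Matrix.star_apply, Matrix.of_apply]
  exact this

lemma psi_cp (n : ℕ) : IsCPfun (psi n) := by
  rintro m M ⟨N, rfl⟩
  let F : Matrix (Fin m × Fin (n+1)) (Fin m) ℂ := fun p b => N p.1 b p.2 0
  obtain ⟨R, hR⟩ := psd_sqrt
    (Matrix.posSemidef_conjTranspose_mul_self F)
  refine ⟨Matrix.of fun a b => iot n (N a b) + R a b • Qop n, ?_⟩
  ext1 a b
  have h0 := congrFun (congrFun hR a) b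
  have h1 : (N.conjTranspose * N) a b 0 0 = ∑ c, star (R c a) * R c b := by
    rw [Matrix.mul_apply, Fintype.sum_prod_type, Matrix.mul_apply] at h0
    simp only [Matrix.conjTranspose_apply] at h0
    rw [← h0, Matrix.mul_apply, Matrix.sum_apply]
    simp only [Matrix.conjTranspose_apply, Matrix.mul_apply, Matrix.star_apply, F]
  rw [Matrix.map_apply, psi_eq, h1, Matrix.mul_apply, Matrix.mul_apply, iot_sum, Finset.sum_smul,
    ← Finset.sum_add_distrib]
  refine Finset.sum_congr rfl fun c _ => ?_
  simp only [Matrix.conjTranspose_apply, Matrix.of_apply, star_add, star_smul, iot_star, Qop_star, iot_mul]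
  simp only [add_mul, mul_add, smul_mul_assoc, mul_smul_comm, Qop_mul_iot, iot_mul_Qop, Qop_mul,
    smul_zero, add_zero, zero_add, smul_smul]
  rw [mul_comm]

lemma P_norm (n : ℕ) : ‖iot n 1‖ ≤ 1 := by
  refine IsStarProjection.norm_le _ ⟨?_, ?_⟩
  · rw [IsIdempotentElem, ← iot_mul, mul_one]
  · rw [isSelfAdjoint_iff, iot_star, star_one]

lemma P_E (n i : ℕ) (j : ℕ) (h : i ≤ n) : iot n 1 * E i j = E i j := by
  rw [iot_one, Finset.sum_mul, Finset.sum_eq_single (⟨i, by omega⟩ : Fin (n+1))]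
  · simp [E_mul]
  · intro b _ hb
    rw [E_mul, if_neg]
    intro h'; exact hb (Fin.ext h')
  · simp

lemma E_P (n i : ℕ) (j : ℕ) (h : j ≤ n) : E i j * iot n 1 = E i j := by
  have := congrArg star (P_E n j i h)
  rw [star_mul, iot_star, E_star] at this
  simpa using this

lemma span_ev (K : Hs →L[ℂ] Hs)
    (hK : K ∈ Submodule.span ℂ {T | ∃ i j : ℕ, (i, j) ≠ (0, 0) ∧ T = E i j}) :
    ∃ n0, ∀ n ≥ n0, iot n 1 * K * iot n 1 = K := by
  induction hK using Submodule.span_induction with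
  | mem x hx =>
    obtain ⟨i, j, _, rfl⟩ := hx
    exact ⟨max i j, fun n hn => by rw [P_E _ _ _ (by omega), E_P _ _ _ (by omega)]⟩
  | zero => exact ⟨0, by simp⟩
  | add x y _ _ hx hy =>
    obtain ⟨a, ha⟩ := hx
    obtain ⟨b, hb⟩ := hy
    exact ⟨max a b, fun n hn => by
      rw [mul_add, add_mul, ha n (by omega), hb n (by omega)]⟩
  | smul c x _ hx =>
    obtain ⟨a, ha⟩ := hx
    exact ⟨a, fun n hn => by rw [mul_smul_comm, smul_mul_assoc, ha n hn]⟩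

lemma K0_entry (K : Hs →L[ℂ] Hs) (hK : K ∈ K0) : entry K 0 0 = 0 := by
  have hc : IsClosed {K : Hs →L[ℂ] Hs | entry K 0 0 = 0} := by
    refine isClosed_eq ?_ continuous_const
    unfold entry
    fun_prop
  refine closure_minimal ?_ hc hK
  intro x hx
  induction hx using Submodule.span_induction with
  | mem x hx =>
    obtain ⟨i, j, h, rfl⟩ := hx
    simp only [Set.mem_setOf_eq, entry, E_apply, inner_smul_right, e_inner]
    by_cases hi : i = 0
    · by_cases hj : j = 0
      · simp [hi, hj] at h
      · simp [hj]
    · simp [Ne.symm hi]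
  | zero => simp [entry]
  | add x y _ _ hx hy =>
    simp only [Set.mem_setOf_eq] at *
    simp [entry_add, hx, hy]
  | smul c x _ hx =>
    simp only [Set.mem_setOf_eq] at *
    simp [entry_smul, hx]

lemma conv_K0 (K : Hs →L[ℂ] Hs) (hK : K ∈ K0) (ε : ℝ) (hε : 0 < ε) :
    ∃ n0, ∀ n ≥ n0, ‖K - iot n 1 * K * iot n 1‖ < ε := by
  obtain ⟨L, hL, hd⟩ := Metric.mem_closure_iff.1 hK (ε / 2) (by positivity)
  obtain ⟨n0, h0⟩ := span_ev L hL
  refine ⟨n0, fun n hn => ?_⟩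
  rw [dist_eq_norm] at hd
  have h1 : K - iot n 1 * K * iot n 1 = (K - L) - iot n 1 * (K - L) * iot n 1 := by
    rw [mul_sub, sub_mul, h0 n hn]; abel
  have h2 : ‖iot n 1 * (K - L) * iot n 1‖ ≤ ‖K - L‖ := by
    have hp := P_norm n
    calc _ ≤ ‖iot n 1‖ * ‖K - L‖ * ‖iot n 1‖ :=
          (norm_mul_le _ _).trans (by gcongr; exact norm_mul_le _ _)
      _ ≤ 1 * ‖K - L‖ * 1 := by gcongr
      _ = _ := by ring
  rw [h1]
  have := norm_sub_le (K - L) (iot n 1 * (K - L) * iot n 1)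
  linarith

theorem stmt_3 :
    ∃ (d : ℕ → ℕ)
      (φ : ∀ n : ℕ, ↥S0 →ₗ[ℂ] Matrix (Fin (d n)) (Fin (d n)) ℂ)
      (ψ : ∀ n : ℕ, Matrix (Fin (d n)) (Fin (d n)) ℂ →ₗ[ℂ] ↥S0),
      (∀ n, φ n ⟨1, one_mem_S0⟩ = 1) ∧
      (∀ n, IsCPonS0 (φ n)) ∧
      (∀ n, ψ n 1 = ⟨1, one_mem_S0⟩) ∧
      (∀ n, IsCPfun (fun Y : Matrix (Fin (d n)) (Fin (d n)) ℂ =>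
        ((ψ n Y : ↥S0) : Hs →L[ℂ] Hs))) ∧
      ∀ X : ↥S0,
        Filter.Tendsto
          (fun n => ‖(X : Hs →L[ℂ] Hs) - ((ψ n (φ n X) : ↥S0) : Hs →L[ℂ] Hs)‖)
          Filter.atTop (nhds 0) := by
  refine ⟨fun n => n + 1, phiL, psiL, phi_one, phi_cp, fun n => Subtype.ext (psi_one n),
    psi_cp, ?_⟩
  rintro ⟨X, hX⟩
  obtain ⟨Z, hZ, K, hK, rfl⟩ := Submodule.mem_sup.1 hX
  obtain ⟨c, rfl⟩ := Submodule.mem_span_singleton.1 hZ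
  have key : ∀ n, (c • (1 : Hs →L[ℂ] Hs) + K) - psi n (phi n (c • (1 : Hs →L[ℂ] Hs) + K))
      = K - iot n 1 * K * iot n 1 := by
    intro n
    have h1 : phi n (c • (1 : Hs →L[ℂ] Hs) + K) = c • 1 + phi n K := by
      rw [← phi_one]
      ext i j
      simp [phi, entry_add, entry_smul]
    have h2 : phi n K 0 0 = 0 := K0_entry K hK
    rw [h1, psi_eq, iot_add, iot_smul, iot_phi, Qop_eq]
    simp only [Matrix.add_apply, h2, Matrix.smul_apply, Matrix.one_apply_eq, smul_eq_mul, mul_one,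
      add_zero, smul_sub]
    abel
  rw [Metric.tendsto_atTop]
  intro ε hε
  obtain ⟨n0, h0⟩ := conv_K0 K hK ε hε
  refine ⟨n0, fun n hn => ?_⟩
  have := h0 n hn
  rw [← key n] at this
  rw [Real.dist_0_eq_abs, abs_of_nonneg (norm_nonneg _)]
  exact this
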